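/- For every γ > 0 and every λ₀ ∈ (0, π/(2γ)), the series ∑_{n=0}^∞ 32·γ²·cos(λ₀γ)/(π⁴·((1+2n)² − (2λ₀γ/π)²)²) converges and equals C(λ₀)·sin(λ₀γ)/(λ₀·γ). -/

import Mathlib

open Real Set
open Filter Topology

/-!
The partial fraction expansion of the cotangent at `(1 - z) / 2`, with its terms regrouped, is
`π tan (π z / 2) = ∑ 4 z / ((1 + 2 n) ^ 2 - z ^ 2)`. It converges locally uniformly away from the
odd integers, so by Weierstrass it may be differentiated termwise, which gives
`π² / (2 cos² (π z / 2)) = ∑ 4 ((1 + 2 n) ^ 2 + z ^ 2) / ((1 + 2 n) ^ 2 - z ^ 2) ^ 2`. Subtracting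
`z⁻¹` times the first series leaves `∑ 8 z ^ 2 / ((1 + 2 n) ^ 2 - z ^ 2) ^ 2`, and the theorem is
the case `z = 2 λ₀ γ / π`.
-/

theorem hasSum_deriv_of_hasSumLocallyUniformlyOn {ι : Type*} {F : ι → ℂ → ℂ} {f : ℂ → ℂ}
    {U : Set ℂ} (hf : HasSumLocallyUniformlyOn F f U) (hU : IsOpen U)
    (hF : ∀ i, DifferentiableOn ℂ (F i) U) {z : ℂ} (hz : z ∈ U) :
    HasSum (fun i => deriv (F i) z) (deriv f z) := by
  have hpartial (s : Finset ι) : DifferentiableOn ℂ (fun w => ∑ i ∈ s, F i w) U :=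
    DifferentiableOn.fun_sum fun i _ => hF i
  refine ((TendstoLocallyUniformlyOn.deriv hf (.of_forall hpartial) hU).tendsto_at hz).congr
    fun s => ?_
  exact deriv_fun_sum fun i _ => (hF i).differentiableAt (hU.mem_nhds hz)

/-- The `n`-th term of the partial fraction expansion of `π tan (π z / 2)`, the tangent analogue of
Mathlib's `cotTerm`. At its poles `z = ±(1 + 2 n)` it takes the junk value `0`. -/
noncomputable def tanTerm (z : ℂ) (n : ℕ) : ℂ := 4 * z / ((1 + 2 * (n : ℂ)) ^ 2 - z ^ 2)

theorem norm_tanTerm_le {z : ℂ} {R : ℝ} {n : ℕ} (hz : ‖z‖ ≤ R)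
    (hn : 2 * R ^ 2 ≤ (1 + 2 * (n : ℝ)) ^ 2) :
    ‖tanTerm z n‖ ≤ 8 * R * (1 / (1 + 2 * (n : ℝ)) ^ 2) := by
  have hdenom : (1 + 2 * (n : ℝ)) ^ 2 / 2 ≤ ‖(1 + 2 * (n : ℂ)) ^ 2 - z ^ 2‖ := by
    have hodd : ‖(1 + 2 * (n : ℂ)) ^ 2‖ = (1 + 2 * (n : ℝ)) ^ 2 := by
      exact_mod_cast Complex.norm_natCast ((1 + 2 * n) ^ 2)
    have hsq : ‖z ^ 2‖ ≤ R ^ 2 := by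
      rw [norm_pow]
      gcongr
    linarith [norm_sub_norm_le ((1 + 2 * (n : ℂ)) ^ 2) (z ^ 2)]
  calc ‖tanTerm z n‖ = 4 * ‖z‖ / ‖(1 + 2 * (n : ℂ)) ^ 2 - z ^ 2‖ := by simp [tanTerm]
    _ ≤ 4 * R / ((1 + 2 * (n : ℝ)) ^ 2 / 2) := by gcongr; linarith [norm_nonneg z]
    _ = 8 * R * (1 / (1 + 2 * (n : ℝ)) ^ 2) := by field

theorem summable_one_div_odd_sq : Summable fun n : ℕ => 1 / (1 + 2 * (n : ℝ)) ^ 2 := by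
  have hinj : Function.Injective fun n : ℕ => 1 + 2 * n := fun a b h => by simpa using h
  simpa [Function.comp_def] using
    (Real.summable_one_div_nat_pow.mpr one_lt_two).comp_injective hinj

theorem summableLocallyUniformlyOn_tanTerm {U : Set ℂ} (hU : IsOpen U) :
    SummableLocallyUniformlyOn (fun n z => tanTerm z n) U := by
  refine .of_locally_bounded_eventually hU fun K _ hK => ?_
  obtain ⟨R, hR⟩ := hK.isBounded.exists_norm_le
  refine ⟨_, summable_one_div_odd_sq.mul_left (8 * R), ?_⟩
  have hodd : Tendsto (fun n : ℕ => (1 + 2 * (n : ℝ)) ^ 2) atTop atTop :=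
    (tendsto_pow_atTop two_ne_zero).comp (tendsto_atTop_add_const_left _ _
      (tendsto_natCast_atTop_atTop.const_mul_atTop two_pos))
  rw [Nat.cofinite_eq_atTop]
  filter_upwards [hodd.eventually_ge_atTop (2 * R ^ 2)] with n hn z hz
  exact norm_tanTerm_le (hR z hz) hn

theorem one_sub_div_two_mem_integerComplement {z : ℂ} (hz : Complex.cos (π / 2 * z) ≠ 0) :
    (1 - z) / 2 ∈ Complex.integerComplement := by
  rintro ⟨k, hk⟩
  refine hz ?_
  calc Complex.cos (π / 2 * z) = Complex.sin (π / 2 - π / 2 * z) :=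
        (Complex.sin_pi_div_two_sub _).symm
    _ = Complex.sin (k * π) := by rw [hk]; ring_nf
    _ = 0 := Complex.sin_int_mul_pi k

theorem one_add_two_mul_sub_ne_zero {z : ℂ} (hz : Complex.cos (π / 2 * z) ≠ 0) (k : ℤ) :
    1 + 2 * (k : ℂ) - z ≠ 0 := by
  have h := Complex.integerComplement_add_ne_zero (one_sub_div_two_mem_integerComplement hz) k
  contrapose! h
  linear_combination h / 2

theorem one_add_two_mul_add_ne_zero {z : ℂ} (hz : Complex.cos (π / 2 * z) ≠ 0) (k : ℤ) :
    1 + 2 * (k : ℂ) + z ≠ 0 := by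
  simpa using one_add_two_mul_sub_ne_zero (z := -z) (by simpa using hz) k

theorem one_add_two_mul_sq_sub_sq_ne_zero {z : ℂ} (hz : Complex.cos (π / 2 * z) ≠ 0) (k : ℤ) :
    (1 + 2 * (k : ℂ)) ^ 2 - z ^ 2 ≠ 0 := by
  rw [sq_sub_sq]
  exact mul_ne_zero (one_add_two_mul_add_ne_zero hz k) (one_add_two_mul_sub_ne_zero hz k)

theorem tanTerm_eq_two_div_sub_two_div {z : ℂ} (hz : Complex.cos (π / 2 * z) ≠ 0) (n : ℕ) :
    tanTerm z n = 2 / (1 + 2 * (n : ℂ) - z) - 2 / (1 + 2 * (n : ℂ) + z) := by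
  have hsub : 1 + 2 * (n : ℂ) - z ≠ 0 := mod_cast one_add_two_mul_sub_ne_zero hz n
  have hadd : 1 + 2 * (n : ℂ) + z ≠ 0 := mod_cast one_add_two_mul_add_ne_zero hz n
  rw [tanTerm, sq_sub_sq, div_sub_div _ _ hsub hadd]
  ring

theorem tanTerm_eq_cotTerm_add {z : ℂ} (hz : Complex.cos (π / 2 * z) ≠ 0) (n : ℕ) :
    tanTerm z n = cotTerm ((1 - z) / 2) n +
      (1 / ((1 - z) / 2 + n) - 1 / ((1 - z) / 2 + (n + 1 : ℕ))) := by
  have hsub : (1 - z) / 2 + n = (1 + 2 * (n : ℂ) - z) / 2 := by ring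
  have hadd : (1 - z) / 2 - (n + 1) = -((1 + 2 * (n : ℂ) + z) / 2) := by ring
  rw [tanTerm_eq_two_div_sub_two_div hz, cotTerm, hsub, hadd, Nat.cast_succ,
    one_div_neg_eq_neg_one_div, one_div_div, one_div_div]
  ring

theorem hasSum_tanTerm {z : ℂ} (hz : Complex.cos (π / 2 * z) ≠ 0) :
    HasSum (tanTerm z) (π * Complex.tan (π / 2 * z)) := by
  have hw := one_sub_div_two_mem_integerComplement hz
  set w : ℂ := (1 - z) / 2 with hw_def
  have hsummable : Summable (tanTerm z) :=
    (summableLocallyUniformlyOn_tanTerm isOpen_univ).summable (mem_univ z)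
  have htan : π * Complex.tan (π / 2 * z) = π * Complex.cot (π * w) - 1 / w + (1 / w - 0) := by
    have hangle : π * w = π / 2 - π / 2 * z := by rw [hw_def]; ring
    rw [hangle, Complex.cot, Complex.cos_pi_div_two_sub, Complex.sin_pi_div_two_sub, Complex.tan]
    ring
  have hpartial (N : ℕ) : ∑ n ∈ Finset.range N, tanTerm z n =
      ∑ n ∈ Finset.range N, cotTerm w n + (1 / w - 1 / (w + N)) := by
    simp only [tanTerm_eq_cotTerm_add hz, Finset.sum_add_distrib]
    rw [Finset.sum_range_sub' fun n : ℕ => 1 / (w + n), Nat.cast_zero, add_zero]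
  have hboundary : Tendsto (fun N : ℕ => 1 / (w + N)) atTop (𝓝 0) := by
    simpa only [one_div, Function.comp_def] using tendsto_inv₀_cobounded.comp
      ((tendsto_const_add_cobounded w).comp tendsto_natCast_atTop_cobounded)
  rw [hsummable.hasSum_iff_tendsto_nat, htan]
  simp only [hpartial]
  exact (tendsto_logDeriv_euler_cot_sub hw).add (hboundary.const_sub _)

theorem hasDerivAt_tanTerm {z : ℂ} {n : ℕ} (hn : (1 + 2 * (n : ℂ)) ^ 2 - z ^ 2 ≠ 0) :
    HasDerivAt (fun w => tanTerm w n)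
      (4 * ((1 + 2 * (n : ℂ)) ^ 2 + z ^ 2) / ((1 + 2 * (n : ℂ)) ^ 2 - z ^ 2) ^ 2) z := by
  have hnum : HasDerivAt (fun w : ℂ => 4 * w) 4 z := by
    simpa using (hasDerivAt_id z).const_mul 4
  have hdenom : HasDerivAt (fun w => (1 + 2 * (n : ℂ)) ^ 2 - w ^ 2) (-(2 * z)) z := by
    simpa using (hasDerivAt_pow 2 z).const_sub ((1 + 2 * (n : ℂ)) ^ 2)
  refine (hnum.fun_div hdenom hn).congr_deriv ?_
  ring

theorem hasDerivAt_pi_mul_tan_pi_div_two_mul {z : ℂ} (hz : Complex.cos (π / 2 * z) ≠ 0) :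
    HasDerivAt (fun w : ℂ => π * Complex.tan (π / 2 * w))
      (π ^ 2 / (2 * Complex.cos (π / 2 * z) ^ 2)) z := by
  have hinner : HasDerivAt (fun w : ℂ => (π / 2 : ℂ) * w) (π / 2) z := by
    simpa using (hasDerivAt_id z).const_mul (π / 2 : ℂ)
  refine (((Complex.hasDerivAt_tan hz).comp z hinner).const_mul (π : ℂ)).congr_deriv ?_
  field

theorem hasSum_pi_sq_div_two_mul_cos_sq {z : ℂ} (hz : Complex.cos (π / 2 * z) ≠ 0) :
    HasSum
      (fun n : ℕ => 4 * ((1 + 2 * (n : ℂ)) ^ 2 + z ^ 2) / ((1 + 2 * (n : ℂ)) ^ 2 - z ^ 2) ^ 2)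
      (π ^ 2 / (2 * Complex.cos (π / 2 * z) ^ 2)) := by
  set U : Set ℂ := {w : ℂ | Complex.cos (π / 2 * w) ≠ 0}
  have hU : IsOpen U := isOpen_ne_fun (by fun_prop) continuous_const
  have hterm (n : ℕ) {w : ℂ} (hw : w ∈ U) :=
    hasDerivAt_tanTerm (n := n) (mod_cast one_add_two_mul_sq_sub_sq_ne_zero hw n)
  have htan : EqOn (fun w => ∑' n, tanTerm w n) (fun w => π * Complex.tan (π / 2 * w)) U :=
    fun w hw => (hasSum_tanTerm hw).tsum_eq
  have h := hasSum_deriv_of_hasSumLocallyUniformlyOn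
    (summableLocallyUniformlyOn_tanTerm hU).hasSumLocallyUniformlyOn hU
    (fun n w hw => (hterm n hw).differentiableAt.differentiableWithinAt) hz
  simp only [(hterm _ hz).deriv] at h
  rwa [(htan.eventuallyEq_of_mem (hU.mem_nhds hz)).deriv_eq,
    (hasDerivAt_pi_mul_tan_pi_div_two_mul hz).deriv] at h

theorem hasSum_one_div_odd_sq_sub_sq_sq {z : ℂ} (hz₀ : z ≠ 0)
    (hz : Complex.cos (π / 2 * z) ≠ 0) :
    HasSum (fun n : ℕ => 1 / ((1 + 2 * (n : ℂ)) ^ 2 - z ^ 2) ^ 2)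
      ((π ^ 2 / (2 * Complex.cos (π / 2 * z) ^ 2) - π * Complex.tan (π / 2 * z) / z) /
        (8 * z ^ 2)) := by
  refine (((hasSum_pi_sq_div_two_mul_cos_sq hz).sub
    ((hasSum_tanTerm hz).div_const z)).div_const (8 * z ^ 2)).congr_fun fun n => ?_
  have hn : (1 + 2 * (n : ℂ)) ^ 2 - z ^ 2 ≠ 0 :=
    mod_cast one_add_two_mul_sq_sub_sq_ne_zero hz n
  rw [tanTerm]
  field_simp
  ring

theorem stmt_9_general (γ l : ℂ) (hsin : Complex.sin (l * γ) ≠ 0)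
    (hcos : Complex.cos (l * γ) ≠ 0) (C : ℂ)
    (hC : C = (1 / 2) * (γ / (l * Complex.sin (l * γ) * Complex.cos (l * γ)) - 1 / l ^ 2)) :
    HasSum
      (fun n : ℕ =>
        32 * γ ^ 2 * Complex.cos (l * γ) /
          (π ^ 4 * ((1 + 2 * (n : ℂ)) ^ 2 - (2 * l * γ / π) ^ 2) ^ 2))
      (C * Complex.sin (l * γ) / (l * γ)) := by
  have hlγ : l * γ ≠ 0 := fun h => hsin (by rw [h, Complex.sin_zero])
  obtain ⟨hl, hγ⟩ := mul_ne_zero_iff.mp hlγ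
  have hπ : (π : ℂ) ≠ 0 := Complex.ofReal_ne_zero.mpr pi_ne_zero
  have hangle : π / 2 * (2 * l * γ / π) = l * γ := by field
  have hz : 2 * l * γ / π ≠ 0 := by simp [hl, hγ, hπ]
  have h := (hasSum_one_div_odd_sq_sub_sq_sq hz (by rwa [hangle])).mul_left
    (32 * γ ^ 2 * Complex.cos (l * γ) / π ^ 4)
  rw [hangle, Complex.tan] at h
  simp only [div_mul_div_comm, mul_one] at h
  convert! h using 1
  rw [hC]
  field

theorem mul_mem_Ioo_zero_pi_div_two {γ l : ℝ} (hγ : 0 < γ) (hl : l ∈ Ioo 0 (π / (2 * γ))) :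
    l * γ ∈ Ioo 0 (π / 2) := by
  refine ⟨mul_pos hl.1 hγ, ?_⟩
  rw [← lt_div_iff₀ hγ, div_div]
  exact hl.2

/-- For every `γ > 0` and `λ₀ ∈ (0, π/(2γ))`, with
`C(λ₀) = (1/2)·(γ/(λ₀·sin(λ₀γ)·cos(λ₀γ)) − 1/λ₀²)`, the series
`∑_{n=0}^∞ 32·γ²·cos(λ₀γ)/(π⁴·((1+2n)² − (2λ₀γ/π)²)²)` converges and
equals `C(λ₀)·sin(λ₀γ)/(λ₀·γ)`. -/
theorem stmt_9 (γ : ℝ) (hγ : 0 < γ) (l : ℝ) (hl : l ∈ Ioo 0 (π / (2 * γ)))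
    (C : ℝ)
    (hC : C = (1/2) * (γ / (l * Real.sin (l * γ) * Real.cos (l * γ)) - 1 / l ^ 2)) :
    HasSum
      (fun n : ℕ =>
        32 * γ ^ 2 * Real.cos (l * γ) /
          (π ^ 4 * ((1 + 2 * (n : ℝ)) ^ 2 - (2 * l * γ / π) ^ 2) ^ 2))
      (C * Real.sin (l * γ) / (l * γ)) := by
  have hlγ := mul_mem_Ioo_zero_pi_div_two hγ hl
  have hsin : Real.sin (l * γ) ≠ 0 :=
    (sin_pos_of_pos_of_lt_pi hlγ.1 (hlγ.2.trans (half_lt_self pi_pos))).ne'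
  have hcos : Real.cos (l * γ) ≠ 0 :=
    (cos_pos_of_mem_Ioo ⟨by linarith [pi_pos, hlγ.1], hlγ.2⟩).ne'
  exact_mod_cast stmt_9_general γ l (mod_cast hsin) (mod_cast hcos) C (by rw [hC]; push_cast; rfl)
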